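/- Let φ : ℝⁿ × I → ℝ be a smooth convex function on ℝⁿ times an open interval I ⊆ ℝ, such that for each t the function x ↦ φ(x,t) grows sufficiently fast (e.g. φ(x,t) ≥ c|x|² − C uniformly on compacts in t). Then the function F(t) = −log ∫_{ℝⁿ} e^{−φ(x,t)} dx is convex on I. -/

import Mathlib

open MeasureTheory

lemma bm_compact (K L C : Set ℝ) (hK : IsCompact K) (hL : IsCompact L) (hK0 : K.Nonempty)
    (hL0 : L.Nonempty) (h : ∀ x ∈ K, ∀ y ∈ L, x + y ∈ C) :
    volume K + volume L ≤ volume C := by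
  obtain ⟨M, hM, hM'⟩ := hK.exists_isGreatest hK0
  obtain ⟨m, hm, hm'⟩ := hL.exists_isLeast hL0
  have e1 : volume ((fun x => x + m) '' K) = volume K := by
    simp
  have e2 : volume ((fun x => M + x) '' L) = volume L := by
    simp
  have c2 : IsCompact ((fun x => M + x) '' L) := hL.image (by fun_prop)
  rw [← e1, ← e2, ← measure_union₀ c2.measurableSet.nullMeasurableSet]
  · apply measure_mono
    rintro z (⟨x, hx, rfl⟩ | ⟨x, hx, rfl⟩)
    · exact h _ hx _ hm
    · exact h _ hM _ hx
  · have : ((fun x => x + m) '' K) ∩ ((fun x => M + x) '' L) ⊆ {M + m} := by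
      rintro z ⟨⟨x, hx, rfl⟩, ⟨y, hy, hxy⟩⟩
      have := hM' hx
      have := hm' hy
      simp only [Set.mem_singleton_iff] at *
      linarith
    exact measure_mono_null this (by simp)

lemma bm_meas (A B C : Set ℝ) (hA : MeasurableSet A) (hB : MeasurableSet B) (hA0 : A.Nonempty)
    (hB0 : B.Nonempty) (h : ∀ x ∈ A, ∀ y ∈ B, x + y ∈ C) :
    volume A + volume B ≤ volume C := by
  obtain ⟨x0, hx0⟩ := hA0
  obtain ⟨y0, hy0⟩ := hB0
  have key : ∀ K ⊆ A, IsCompact K → ∀ L ⊆ B, IsCompact L → volume K + volume L ≤ volume C := by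
    intro K hKA hK L hLB hL
    refine le_trans (add_le_add (measure_mono (Set.subset_insert x0 K))
      (measure_mono (Set.subset_insert y0 L)))
      (bm_compact _ _ C (hK.insert x0) (hL.insert y0) (by simp) (by simp) ?_)
    intro x hx y hy
    exact h _ (Set.insert_subset hx0 hKA hx) _ (Set.insert_subset hy0 hLB hy)
  refine le_of_forall_lt fun r hr => ?_
  by_contra hcon
  have hC : volume C < volume A + volume B := lt_of_le_of_lt (not_lt.mp hcon) hr
  rw [hA.measure_eq_iSup_isCompact, hB.measure_eq_iSup_isCompact] at hC
  refine absurd hC (not_lt.mpr ?_)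
  simp only [iSup_and']
  exact ENNReal.biSup_add_biSup_le' (p := fun K => K ⊆ A ∧ IsCompact K)
    (q := fun K => K ⊆ B ∧ IsCompact K) ⟨∅, by simp, by simp⟩ ⟨∅, by simp, by simp⟩
    (fun K hK L hL => key K hK.1 hK.2 L hL.1 hL.2)

open Pointwise in
lemma bm_smul (a b : ℝ) (ha : 0 < a) (hb : 0 < b) (A B C : Set ℝ) (hA : MeasurableSet A)
    (hB : MeasurableSet B) (hA0 : A.Nonempty)
    (hB0 : B.Nonempty) (h : ∀ x ∈ A, ∀ y ∈ B, a * x + b * y ∈ C) :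
    ENNReal.ofReal a * volume A + ENNReal.ofReal b * volume B ≤ volume C := by
  have := bm_meas (a • A) (b • B) C (hA.const_smul_of_ne_zero ha.ne')
    (hB.const_smul_of_ne_zero hb.ne') hA0.smul_set hB0.smul_set (by
      rintro _ ⟨x, hx, rfl⟩ _ ⟨y, hy, rfl⟩
      exact h x hx y hy)
  simpa [Measure.addHaar_smul, abs_of_pos ha, abs_of_pos hb] using this

def PL (E : Type*) [AddCommGroup E] [Module ℝ E] [MeasureSpace E] : Prop :=
  ∀ a b : ℝ, 0 < a → 0 < b → a + b = 1 → ∀ f g h : E → ENNReal, Measurable f → Measurable g →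
    Measurable h → (∀ x y, f x ^ a * g y ^ b ≤ h (a • x + b • y)) →
    (∫⁻ x, f x) ^ a * (∫⁻ x, g x) ^ b ≤ ∫⁻ x, h x

lemma PL.prod {E F : Type*} [AddCommGroup E] [Module ℝ E] [MeasureSpace E]
    [AddCommGroup F] [Module ℝ F] [MeasureSpace F] [SFinite (volume : Measure E)]
    [SFinite (volume : Measure F)] (hE : PL E) (hF : PL F) : PL (E × F) := by
  intro a b ha hb hab f g h hf hg hh H
  rw [Measure.volume_eq_prod, lintegral_prod _ hf.aemeasurable, lintegral_prod _ hg.aemeasurable,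
    lintegral_prod _ hh.aemeasurable]
  refine hE a b ha hb hab _ _ _ hf.lintegral_prod_right' hg.lintegral_prod_right'
    hh.lintegral_prod_right' ?_
  intro x y
  refine hF a b ha hb hab _ _ _ (hf.comp measurable_prodMk_left) (hg.comp measurable_prodMk_left)
    (hh.comp measurable_prodMk_left) ?_
  intro u v
  exact H (x, u) (y, v)

lemma PL.transfer {E F : Type*} [AddCommGroup E] [Module ℝ E] [MeasureSpace E]
    [AddCommGroup F] [Module ℝ F] [MeasureSpace F] (hE : PL E) (e : E → F)
    (he : MeasurePreserving e volume volume)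
    (hadd : ∀ (a b : ℝ) x y, e (a • x + b • y) = a • e x + b • e y) : PL F := by
  intro a b ha hb hab f g h hf hg hh H
  rw [← he.lintegral_comp hf, ← he.lintegral_comp hg, ← he.lintegral_comp hh]
  refine hE a b ha hb hab _ _ _ (hf.comp he.measurable) (hg.comp he.measurable)
    (hh.comp he.measurable) ?_
  intro x y
  simp only [hadd]
  exact H _ _

lemma PL.zero : PL (Fin 0 → ℝ) := by
  intro a b ha hb hab f g h hf hg hh H
  rw [Measure.volume_pi_eq_dirac 0, lintegral_dirac' _ hf, lintegral_dirac' _ hg, lintegral_dirac' _ hh]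
  simpa using H 0 0

lemma PL.pi (h1 : PL ℝ) (n : ℕ) : PL (Fin n → ℝ) := by
  induction n with
  | zero => exact PL.zero
  | succ n ih =>
    have := h1.prod ih
    refine this.transfer _ (volume_preserving_piFinSuccAbove (fun _ => ℝ) 0).symm ?_
    intro a b x y
    ext i
    refine Fin.cases ?_ (fun i => ?_) i <;> simp [MeasurableEquiv.piFinSuccAbove]

lemma PL.euclidean (h1 : PL ℝ) (n : ℕ) : PL (EuclideanSpace ℝ (Fin n)) := by
  refine (PL.pi h1 n).transfer (WithLp.toLp 2) (PiLp.volume_preserving_toLp (Fin n)) ?_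
  intro a b x y
  rfl

lemma ennreal_amgm (a b : ℝ) (ha : 0 < a) (hb : 0 < b) (hab : a + b = 1) (X Y : ENNReal) :
    X ^ a * Y ^ b ≤ ENNReal.ofReal a * X + ENNReal.ofReal b * Y := by
  by_cases hX : X = ⊤
  · subst hX
    simp [ENNReal.mul_top, ha]
  by_cases hY : Y = ⊤
  · subst hY
    simp [ENNReal.mul_top, hb]
  lift X to NNReal using hX
  lift Y to NNReal using hY
  lift a to NNReal using ha.le
  lift b to NNReal using hb.le
  have := NNReal.geom_mean_le_arith_mean2_weighted a b X Y (by exact_mod_cast hab)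
  rw [ENNReal.ofReal_coe_nnreal, ENNReal.ofReal_coe_nnreal,
    ← ENNReal.coe_rpow_of_nonneg _ ha.le, ← ENNReal.coe_rpow_of_nonneg _ hb.le]
  exact_mod_cast this

lemma layer (F : ℝ → ENNReal) (hF : Measurable F) (h1 : ∀ x, F x ≤ 1) :
    ∫⁻ x, F x = ∫⁻ l in Set.Ioi (0 : ℝ), volume {x | ENNReal.ofReal l < F x} := by
  have hfin : ∀ x, F x ≠ ⊤ := fun x => ne_top_of_le_ne_top ENNReal.one_ne_top (h1 x)
  have := lintegral_eq_lintegral_meas_lt (volume : Measure ℝ) (f := fun x => (F x).toReal)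
    (Filter.Eventually.of_forall fun x => ENNReal.toReal_nonneg) hF.ennreal_toReal.aemeasurable
  simp only [ENNReal.ofReal_toReal (hfin _)] at this
  rw [this]
  refine setLIntegral_congr_fun measurableSet_Ioi ?_
  intro l hl
  simp only [ENNReal.ofReal_lt_iff_lt_toReal (le_of_lt hl) (hfin _)]

lemma pl_norm (a b : ℝ) (ha : 0 < a) (hb : 0 < b) (hab : a + b = 1) (F G H : ℝ → ENNReal)
    (hF : Measurable F) (hG : Measurable G) (hH : Measurable H)
    (hF1 : ∀ x, F x ≤ 1) (hG1 : ∀ x, G x ≤ 1)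
    (hF2 : ∀ l < 1, ∃ x, l < F x) (hG2 : ∀ l < 1, ∃ x, l < G x)
    (h : ∀ x y, F x ^ a * G y ^ b ≤ H (a * x + b * y)) :
    (∫⁻ x, F x) ^ a * (∫⁻ x, G x) ^ b ≤ ∫⁻ x, H x := by
  refine (ennreal_amgm a b ha hb hab _ _).trans ?_
  refine le_trans ?_ (lintegral_mono fun x => min_le_left (H x) 1)
  rw [layer F hF hF1, layer G hG hG1, layer (fun x => min (H x) 1) (hH.min measurable_const)
    (fun x => min_le_right _ _), ← lintegral_const_mul' _ _ ENNReal.ofReal_ne_top,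
    ← lintegral_const_mul' _ _ ENNReal.ofReal_ne_top]
  refine (le_lintegral_add _ _).trans ?_
  refine lintegral_mono fun l => ?_
  by_cases hl : ENNReal.ofReal l < 1
  · refine bm_smul a b ha hb _ _ _ (measurableSet_lt measurable_const hF)
      (measurableSet_lt measurable_const hG) (hF2 _ hl) (hG2 _ hl) ?_
    intro x hx y hy
    refine lt_min ?_ hl
    refine lt_of_lt_of_le (lt_min hx hy) (le_trans ?_ (h x y))
    calc min (F x) (G y) = min (F x) (G y) ^ a * min (F x) (G y) ^ b := by
          rw [← ENNReal.rpow_add_of_nonneg _ _ ha.le hb.le, hab, ENNReal.rpow_one]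
      _ ≤ _ := by
          gcongr
          · exact min_le_left _ _
          · exact min_le_right _ _
  · have e1 : {x | ENNReal.ofReal l < F x} = ∅ := by
      ext x
      simpa using (hF1 x).trans (not_lt.mp hl)
    have e2 : {x | ENNReal.ofReal l < G x} = ∅ := by
      ext x
      simpa using (hG1 x).trans (not_lt.mp hl)
    simp [e1, e2]

lemma sup_norm (F : ℝ → ENNReal) (h0 : (⨆ x, F x) ≠ 0) (ht : (⨆ x, F x) ≠ ⊤) :
    (∀ x, F x * (⨆ x, F x)⁻¹ ≤ 1) ∧ ∀ l < 1, ∃ x, l < F x * (⨆ x, F x)⁻¹ := by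
  constructor
  · intro x
    rw [← div_eq_mul_inv]
    exact ENNReal.div_le_of_le_mul (by simpa using le_iSup F x)
  · intro l hl
    have : l * (⨆ x, F x) < ⨆ x, F x := by
      calc l * (⨆ x, F x) < 1 * (⨆ x, F x) := (ENNReal.mul_lt_mul_iff_left h0 ht).2 hl
        _ = _ := one_mul _
    obtain ⟨x, hx⟩ := lt_iSup_iff.1 this
    exact ⟨x, by rwa [← div_eq_mul_inv, ENNReal.lt_div_iff_mul_lt (Or.inl h0) (Or.inl ht)]⟩

lemma pl_bdd (a b : ℝ) (ha : 0 < a) (hb : 0 < b) (hab : a + b = 1) (F G H : ℝ → ENNReal)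
    (hF : Measurable F) (hG : Measurable G) (hH : Measurable H)
    (hF1 : (⨆ x, F x) ≠ ⊤) (hG1 : (⨆ x, G x) ≠ ⊤)
    (h : ∀ x y, F x ^ a * G y ^ b ≤ H (a * x + b * y)) :
    (∫⁻ x, F x) ^ a * (∫⁻ x, G x) ^ b ≤ ∫⁻ x, H x := by
  by_cases hF0 : (⨆ x, F x) = 0
  · simp only [ENNReal.iSup_eq_zero] at hF0
    simp [hF0, ha]
  by_cases hG0 : (⨆ x, G x) = 0
  · simp only [ENNReal.iSup_eq_zero] at hG0
    simp [hG0, hb]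
  obtain ⟨p1, p2⟩ := sup_norm F hF0 hF1
  obtain ⟨q1, q2⟩ := sup_norm G hG0 hG1
  set M := ⨆ x, F x
  set N := ⨆ x, G x
  have P0 : (M⁻¹ ^ a * N⁻¹ ^ b) ≠ 0 := by
    refine mul_ne_zero ?_ ?_ <;> simp [ENNReal.rpow_eq_zero_iff, hF1, hG1, hF0, hG0]
  have Pt : (M⁻¹ ^ a * N⁻¹ ^ b) ≠ ⊤ := by
    refine ENNReal.mul_ne_top ?_ ?_ <;> simp [ENNReal.rpow_eq_top_iff, hF1, hG1, hF0, hG0]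
  have := pl_norm a b ha hb hab (fun x => F x * M⁻¹) (fun x => G x * N⁻¹)
    (fun x => H x * (M⁻¹ ^ a * N⁻¹ ^ b)) (hF.mul_const _) (hG.mul_const _) (hH.mul_const _)
    p1 q1 p2 q2 (by
      intro x y
      rw [ENNReal.mul_rpow_of_nonneg _ _ ha.le, ENNReal.mul_rpow_of_nonneg _ _ hb.le,
        mul_mul_mul_comm]
      gcongr
      exact h x y)
  rw [lintegral_mul_const _ hF, lintegral_mul_const _ hG, lintegral_mul_const _ hH,
    ENNReal.mul_rpow_of_nonneg _ _ ha.le, ENNReal.mul_rpow_of_nonneg _ _ hb.le,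
        mul_mul_mul_comm] at this
  exact (ENNReal.mul_le_mul_iff_left P0 Pt).1 this

lemma trunc (F : ℝ → ENNReal) (hF : Measurable F) :
    ∫⁻ x, F x = ⨆ n : ℕ, ∫⁻ x, min (F x) n := by
  rw [← lintegral_iSup (fun n => hF.min measurable_const)]
  · congr 1
    ext x
    rw [← inf_iSup_eq, ENNReal.iSup_natCast, inf_top_eq]
  · intro m n hmn x
    exact min_le_min le_rfl (by exact_mod_cast hmn)

lemma PL.real : PL ℝ := by
  intro a b ha hb hab f g h hf hg hh H
  have e : ∀ (c : ℝ) (hc : 0 < c) (u : ℕ → ENNReal), (⨆ n, u n) ^ c = ⨆ n, u n ^ c := by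
    intro c hc u
    exact (ENNReal.orderIsoRpow c hc).map_iSup u
  rw [trunc f hf, trunc g hg, e a ha, e b hb, ENNReal.iSup_mul]
  refine iSup_le fun i => ?_
  rw [ENNReal.mul_iSup]
  refine iSup_le fun j => ?_
  refine pl_bdd a b ha hb hab _ _ _ (hf.min measurable_const) (hg.min measurable_const) hh ?_ ?_ ?_
  · exact ne_top_of_le_ne_top (ENNReal.natCast_ne_top i) (iSup_le fun x => min_le_right _ _)
  · exact ne_top_of_le_ne_top (ENNReal.natCast_ne_top j) (iSup_le fun x => min_le_right _ _)
  · intro x y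
    refine le_trans ?_ (H x y)
    gcongr <;> exact min_le_left _ _

lemma integrable_aux {n : ℕ} (ψ : EuclideanSpace ℝ (Fin n) → ℝ) (hψ : Continuous ψ)
    (c C : ℝ) (hc : 0 < c) (h : ∀ x, c * ‖x‖ ^ 2 - C ≤ ψ x) :
    Integrable (fun x => Real.exp (-(ψ x))) := by
  have := (GaussianFourier.integrable_cexp_neg_mul_sq_norm_add (V := EuclideanSpace ℝ (Fin n))
    (b := (c : ℂ)) (by simpa using hc) 0 0).norm.const_mul (Real.exp C)
  refine this.mono' (by fun_prop) (Filter.Eventually.of_forall fun x => ?_)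
  rw [Complex.norm_exp, Real.norm_eq_abs, Real.abs_exp, ← Real.exp_add]
  apply Real.exp_le_exp.2
  have e : (-(c : ℂ) * (‖x‖ : ℂ) ^ 2 + 0 * ((inner ℝ (0 : EuclideanSpace ℝ (Fin n)) x : ℝ) : ℂ)).re
      = -c * ‖x‖ ^ 2 := by
    rw [zero_mul, add_zero]
    norm_cast
  have := h x
  rw [e]
  linarith




/-- Prékopa's theorem: if `φ(x,t)` is a smooth convex function on `ℝⁿ × I`
with quadratic growth in `x` locally uniformly in `t`, then
`t ↦ -log ∫ e^{-φ(x,t)} dx` is convex on `I`. -/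
theorem stmt_4 {n : ℕ} (I : Set ℝ) (hIopen : IsOpen I) (hIconv : Convex ℝ I)
    (φ : EuclideanSpace ℝ (Fin n) × ℝ → ℝ)
    (hsmooth : ContDiff ℝ (⊤ : ℕ∞) φ)
    (hconv : ConvexOn ℝ ((Set.univ : Set (EuclideanSpace ℝ (Fin n))) ×ˢ I) φ)
    (c C : ℝ) (hc : 0 < c)
    (hgrowth : ∀ x : EuclideanSpace ℝ (Fin n), ∀ t ∈ I, c * ‖x‖ ^ 2 - C ≤ φ (x, t)) :
    ConvexOn ℝ I (fun t => - Real.log (∫ x : EuclideanSpace ℝ (Fin n),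
      Real.exp (-(φ (x, t))))) := by
  rw [convexOn_iff_forall_pos]
  refine ⟨hIconv, ?_⟩
  intro s hs t ht a b ha hb hab
  have hφ : Continuous φ := hsmooth.continuous
  have hr : a • s + b • t ∈ I := hIconv hs ht ha.le hb.le hab
  have hint : ∀ t ∈ I, Integrable (fun x : EuclideanSpace ℝ (Fin n) => Real.exp (-(φ (x, t)))) :=
    fun t ht => integrable_aux _ (by fun_prop) c C hc (fun x => hgrowth x t ht)
  have hpos : ∀ t ∈ I, 0 < ∫ x : EuclideanSpace ℝ (Fin n), Real.exp (-(φ (x, t))) :=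
    fun t ht => integral_exp_pos (hint t ht)
  have hm : ∀ t, Measurable
      (fun x : EuclideanSpace ℝ (Fin n) => ENNReal.ofReal (Real.exp (-(φ (x, t))))) :=
    fun t => (ENNReal.continuous_ofReal.comp (by fun_prop)).measurable
  have key := PL.euclidean PL.real n a b ha hb hab _ _ _ (hm s) (hm t) (hm (a • s + b • t)) (by
    intro x y
    rw [ENNReal.ofReal_rpow_of_pos (Real.exp_pos _), ENNReal.ofReal_rpow_of_pos (Real.exp_pos _),
      ← ENNReal.ofReal_mul (by positivity), ← Real.exp_mul, ← Real.exp_mul, ← Real.exp_add]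
    apply ENNReal.ofReal_le_ofReal
    apply Real.exp_le_exp.2
    have := hconv.2 (x := (x, s)) ⟨trivial, hs⟩ (y := (y, t)) ⟨trivial, ht⟩ ha.le hb.le hab
    simp only [Prod.smul_mk, Prod.mk_add_mk, smul_eq_mul] at this ⊢
    linarith)
  have hl : ∀ t ∈ I, ∫⁻ x : EuclideanSpace ℝ (Fin n), ENNReal.ofReal (Real.exp (-(φ (x, t))))
      = ENNReal.ofReal (∫ x : EuclideanSpace ℝ (Fin n), Real.exp (-(φ (x, t)))) := fun t ht =>
    (ofReal_integral_eq_lintegral_ofReal (hint t ht)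
      (Filter.Eventually.of_forall fun x => (Real.exp_pos _).le)).symm
  rw [hl s hs, hl t ht, hl _ hr] at key
  have p1 := hpos s hs
  have p2 := hpos t ht
  have p3 := hpos _ hr
  rw [ENNReal.ofReal_rpow_of_pos p1, ENNReal.ofReal_rpow_of_pos p2,
    ← ENNReal.ofReal_mul (by positivity), ENNReal.ofReal_le_ofReal_iff p3.le] at key
  have := Real.log_le_log (by positivity) key
  rw [Real.log_mul (by positivity) (by positivity), Real.log_rpow p1, Real.log_rpow p2] at this
  simp only [smul_eq_mul] at this ⊢
  linarith
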